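/- arXiv:1507.05929 — 2 statements merged into one kernel-verified Lean document; each statement's English description precedes it below -/
import Mathlib

section
/- Fix r ∈ (0,1) and λ ∈ [-1, 2r-1) with 2r-1 > -1. Let d ≥ 1 and let x, y be unit vectors in ℝ^d with ⟨x,y⟩ = λ. Then for every m, P(S_m(x,y) ≠ 0) ≤ m·μ_m(λ), and m·μ_m(λ) → 0 as m → ∞; consequently P(S_m(x,y) ≠ 0) → 0 as m → ∞. -/
open MeasureTheory ProbabilityTheory Filter Topology

noncomputable section

/-- Centered bivariate Gaussian pair `(w, v)` in which `w` and `v` are each standard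
normal and `E[w v] = lam`, realized as the law of `(z₁, lam·z₁ + √(1-lam²)·z₂)`
for independent standard normals `z₁, z₂`. -/
def gaussPair (lam : ℝ) : Measure (ℝ × ℝ) :=
  Measure.map (fun z : ℝ × ℝ => (z.1, lam * z.1 + Real.sqrt (1 - lam ^ 2) * z.2))
    ((gaussianReal 0 1).prod (gaussianReal 0 1))

/-- `μ(λ,h) = P(w ≥ h ∧ v ≥ h)`. -/
def mu (lam h : ℝ) : ℝ := (gaussPair lam {p : ℝ × ℝ | h ≤ p.1 ∧ h ≤ p.2}).toReal

/-- `σ(λ,h) = sqrt(μ(λ,h)(1-μ(λ,h)))`. -/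
def sigma' (lam h : ℝ) : ℝ := Real.sqrt (mu lam h * (1 - mu lam h))

/-- The threshold `h_m = sqrt(2 r log m)`. -/
def hthr (r : ℝ) (m : ℕ) : ℝ := Real.sqrt (2 * r * Real.log m)

/-- `μ_m(λ) = μ(λ, h_m)`. -/
def muM (r : ℝ) (m : ℕ) (lam : ℝ) : ℝ := mu lam (hthr r m)

/-- `σ_m(λ) = σ(λ, h_m)`. -/
def sigM (r : ℝ) (m : ℕ) (lam : ℝ) : ℝ := sigma' lam (hthr r m)

/-- Canonical probability space carrying `m` i.i.d. random vectors in `ℝ^d`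
whose coordinates are i.i.d. standard normal: `a_i ω := ω i`. -/
def Prob (d m : ℕ) : Measure (Fin m → Fin d → ℝ) :=
  Measure.pi fun _ => Measure.pi fun _ : Fin d => gaussianReal 0 1

/-- Euclidean inner product on `ℝ^d`. -/
def dotp {d : ℕ} (a x : Fin d → ℝ) : ℝ := ∑ j, a j * x j

/-- `x` lies on the unit sphere `S^{d-1}`. -/
def unitVec {d : ℕ} (x : Fin d → ℝ) : Prop := ∑ j, x j ^ 2 = 1

/-- The score `S_m(x,y) = (1/m) ∑_i 1[⟨a_i,x⟩ ≥ h_m]·1[⟨a_i,y⟩ ≥ h_m]`. -/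
def score (d m : ℕ) (r : ℝ) (x y : Fin d → ℝ) (ω : Fin m → Fin d → ℝ) : ℝ :=
  (1 / (m : ℝ)) * ∑ i, (if hthr r m ≤ dotp (ω i) x then (1 : ℝ) else 0) *
    (if hthr r m ≤ dotp (ω i) y then (1 : ℝ) else 0)

/-- The standard normal cumulative distribution function `Φ`. -/
def Phi (t : ℝ) : ℝ := (gaussianReal 0 1 (Set.Iic t)).toReal

/-- The standard normal upper tail `P(N(0,1) ≥ t)`. -/
def gaussTail (t : ℝ) : ℝ := (gaussianReal 0 1 {z : ℝ | t ≤ z}).toReal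

lemma gaussPair_mem_meas (h : ℝ) : MeasurableSet {p : ℝ × ℝ | h ≤ p.1 ∧ h ≤ p.2} :=
  (measurableSet_le measurable_const measurable_fst).inter
    (measurableSet_le measurable_const measurable_snd)

lemma gauss_cf (t : ℝ) : ∫ z : ℝ, Complex.exp (t * z * Complex.I) ∂(gaussianReal 0 1)
    = Complex.exp (-(t ^ 2) / 2) := by
  rw [← charFun_apply_real, charFun_gaussianReal]
  congr 1
  simp
  ring

instance gaussPair_prob (lam : ℝ) : IsProbabilityMeasure (gaussPair lam) := by
  unfold gaussPair
  exact Measure.isProbabilityMeasure_map (by fun_prop)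

lemma dual_prod (L : StrongDual ℝ (ℝ × ℝ)) (p : ℝ × ℝ) :
    L p = L (1, 0) * p.1 + L (0, 1) * p.2 := by
  have : p = p.1 • ((1 : ℝ), (0 : ℝ)) + p.2 • ((0 : ℝ), (1 : ℝ)) := by
    ext <;> simp
  conv_lhs => rw [this]
  rw [map_add, map_smul, map_smul]
  simp [mul_comm]

lemma law_eq {d : ℕ} (lam : ℝ) (h1 : -1 ≤ lam) (h2 : lam ≤ 1)
    (x y : Fin d → ℝ) (hx : unitVec x) (hy : unitVec y) (hxy : dotp x y = lam) :
    (Measure.pi fun _ : Fin d => gaussianReal 0 1).map (fun a => (dotp a x, dotp a y))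
      = gaussPair lam := by
  have hmeas : Measurable (fun a : Fin d → ℝ => (dotp a x, dotp a y)) := by
    unfold dotp; fun_prop
  have : IsProbabilityMeasure ((Measure.pi fun _ : Fin d => gaussianReal 0 1).map
      (fun a => (dotp a x, dotp a y))) :=
    Measure.isProbabilityMeasure_map hmeas.aemeasurable
  apply Measure.ext_of_charFunDual
  ext L
  rw [charFunDual_apply, charFunDual_apply]
  obtain ⟨s, t, hL⟩ : ∃ s t : ℝ, ∀ p : ℝ × ℝ, L p = s * p.1 + t * p.2 :=
    ⟨_, _, dual_prod L⟩
  simp_rw [hL]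
  rw [integral_map hmeas.aemeasurable (by fun_prop)]
  unfold gaussPair
  rw [integral_map (by fun_prop) (by fun_prop)]
  have e1 : ∀ a : Fin d → ℝ,
      Complex.exp (((s * (dotp a x, dotp a y).1 + t * (dotp a x, dotp a y).2 : ℝ) : ℂ)
        * Complex.I)
      = ∏ j, (fun j (z : ℝ) => Complex.exp (((s * x j + t * y j : ℝ) : ℂ) * z * Complex.I))
          j (a j) := by
    intro a
    rw [← Complex.exp_sum]
    congr 1
    simp only [dotp]
    push_cast
    rw [Finset.mul_sum, Finset.mul_sum, ← Finset.sum_add_distrib, Finset.sum_mul]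
    refine Finset.sum_congr rfl fun j _ => ?_
    ring
  have e2 : ∀ z : ℝ × ℝ,
      Complex.exp (((s * (z.1, lam * z.1 + Real.sqrt (1 - lam ^ 2) * z.2).1
        + t * (z.1, lam * z.1 + Real.sqrt (1 - lam ^ 2) * z.2).2 : ℝ) : ℂ) * Complex.I)
      = (fun z : ℝ => Complex.exp (((s + t * lam : ℝ) : ℂ) * z * Complex.I)) z.1 *
        (fun z : ℝ => Complex.exp (((t * Real.sqrt (1 - lam ^ 2) : ℝ) : ℂ) * z * Complex.I))
          z.2 := by
    intro z
    simp only
    rw [← Complex.exp_add]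
    congr 1
    push_cast
    ring
  rw [integral_congr_ae (ae_of_all _ e1), integral_congr_ae (ae_of_all _ e2)]
  rw [integral_fintype_prod_eq_prod (fun (j : Fin d) (z : ℝ) =>
      Complex.exp (((s * x j + t * y j : ℝ) : ℂ) * z * Complex.I)),
    integral_prod_mul (fun z : ℝ => Complex.exp (((s + t * lam : ℝ) : ℂ) * z * Complex.I))
      (fun z : ℝ => Complex.exp (((t * Real.sqrt (1 - lam ^ 2) : ℝ) : ℂ) * z * Complex.I))]
  simp_rw [gauss_cf]
  rw [← Complex.exp_sum, ← Complex.exp_add]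
  congr 1
  have hq : Real.sqrt (1 - lam ^ 2) ^ 2 = 1 - lam ^ 2 := Real.sq_sqrt (by nlinarith)
  have key : ∑ j, (-((s * x j + t * y j) ^ 2) / 2)
      = -((s + t * lam) ^ 2) / 2 + -((t * Real.sqrt (1 - lam ^ 2)) ^ 2) / 2 := by
    have hs : ∑ j, (-((s * x j + t * y j) ^ 2) / 2)
        = -(s ^ 2) / 2 * ∑ j, x j ^ 2 - s * t * ∑ j, x j * y j - t ^ 2 / 2 * ∑ j, y j ^ 2 := by
      rw [Finset.mul_sum, Finset.mul_sum, Finset.mul_sum, ← Finset.sum_sub_distrib,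
        ← Finset.sum_sub_distrib]
      refine Finset.sum_congr rfl fun j _ => ?_
      ring
    unfold unitVec at hx hy
    unfold dotp at hxy
    rw [hs, hx, hy, hxy, mul_pow, hq]
    ring
  exact_mod_cast congrArg (fun u : ℝ => (u : ℂ)) key

lemma mu_le (lam : ℝ) (h1 : -1 ≤ lam) (h2 : lam ≤ 1) (h t : ℝ) (ht : 0 ≤ t) :
    mu lam h ≤ Real.exp (-t * (2 * h) + t ^ 2 * (1 + lam)) := by
  set q := Real.sqrt (1 - lam ^ 2) with hqdef
  have hq : q ^ 2 = 1 - lam ^ 2 := Real.sq_sqrt (by nlinarith)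
  set P := (gaussianReal 0 1).prod (gaussianReal 0 1)
  set X : ℝ × ℝ → ℝ := fun z => (1 + lam) * z.1 + q * z.2 with hX
  have e : ∀ z : ℝ × ℝ, Real.exp (t * X z)
      = (fun u : ℝ => Real.exp ((t * (1 + lam)) * u)) z.1 *
        (fun u : ℝ => Real.exp ((t * q) * u)) z.2 := by
    intro z
    simp only [hX]
    rw [← Real.exp_add]
    congr 1
    ring
  have hint : Integrable (fun z => Real.exp (t * X z)) P := by
    simp_rw [e]
    exact (integrable_exp_mul_gaussianReal _).mul_prod (integrable_exp_mul_gaussianReal _)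
  have hg : ∀ c : ℝ, ∫ u : ℝ, Real.exp (c * u) ∂(gaussianReal 0 1) = Real.exp (c ^ 2 / 2) := by
    intro c
    have := congrFun (mgf_id_gaussianReal (μ := 0) (v := 1)) c
    simpa [mgf] using this
  have hm : mgf X P t = Real.exp (t ^ 2 * (1 + lam)) := by
    unfold mgf
    rw [integral_congr_ae (ae_of_all _ e)]
    rw [integral_prod_mul (fun u : ℝ => Real.exp ((t * (1 + lam)) * u))
      (fun u : ℝ => Real.exp ((t * q) * u)), hg, hg, ← Real.exp_add]
    congr 1
    rw [mul_pow t q, hq]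
    ring
  have hc := measure_ge_le_exp_mul_mgf (μ := P) (X := X) (2 * h) ht hint
  rw [hm, ← Real.exp_add] at hc
  refine le_trans ?_ hc
  unfold mu gaussPair
  rw [Measure.map_apply (by fun_prop) (gaussPair_mem_meas h)]
  change P.real _ ≤ _
  refine measureReal_mono ?_
  rintro z ⟨ha, hb⟩
  simp only [Set.mem_ofPred_eq, hX] at *
  linarith

lemma union_bound {d : ℕ} (r lam : ℝ) (h1 : -1 ≤ lam) (h2 : lam ≤ 1)
    (x y : Fin d → ℝ) (hx : unitVec x) (hy : unitVec y) (hxy : dotp x y = lam) (m : ℕ) :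
    ((Prob d m) {ω | score d m r x y ω ≠ 0}).toReal ≤ (m : ℝ) * muM r m lam := by
  have hmeas : Measurable (fun a : Fin d → ℝ => (dotp a x, dotp a y)) := by
    unfold dotp; fun_prop
  have : IsProbabilityMeasure (Prob d m) := by unfold Prob; infer_instance
  set A : Set (Fin d → ℝ) := (fun a : Fin d → ℝ => (dotp a x, dotp a y)) ⁻¹'
    {p : ℝ × ℝ | hthr r m ≤ p.1 ∧ hthr r m ≤ p.2} with hA
  have hAm : MeasurableSet A := hmeas (gaussPair_mem_meas _)
  have hsub : {ω | score d m r x y ω ≠ 0} ⊆ ⋃ i : Fin m, Function.eval i ⁻¹' A := by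
    intro ω hω
    by_contra hcon
    apply hω
    unfold score
    rw [Finset.sum_eq_zero, mul_zero]
    intro i _
    have hi : ω i ∉ A := fun h => hcon (Set.mem_iUnion.2 ⟨i, h⟩)
    by_cases ha : hthr r m ≤ dotp (ω i) x
    · have hb : ¬ hthr r m ≤ dotp (ω i) y := fun hb => hi ⟨ha, hb⟩
      simp [hb]
    · simp [ha]
  have hi : ∀ i : Fin m, (Prob d m).real (Function.eval i ⁻¹' A) = muM r m lam := by
    intro i
    unfold muM mu Measure.real
    rw [← law_eq lam h1 h2 x y hx hy hxy, Measure.map_apply hmeas (gaussPair_mem_meas _)]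
    unfold Prob
    rw [(measurePreserving_eval (fun _ : Fin m => Measure.pi fun _ : Fin d => gaussianReal 0 1)
      i).measure_preimage hAm.nullMeasurableSet]
  calc (Prob d m).real {ω | score d m r x y ω ≠ 0}
      ≤ (Prob d m).real (⋃ i : Fin m, Function.eval i ⁻¹' A) := measureReal_mono hsub
    _ ≤ ∑ i : Fin m, (Prob d m).real (Function.eval i ⁻¹' A) :=
        measureReal_iUnion_fintype_le _
    _ = (m : ℝ) * muM r m lam := by simp [hi]

lemma muM_lim (r : ℝ) (hr : 0 < r) (lam : ℝ) (h1 : -1 ≤ lam) (h2 : lam ≤ 1)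
    (h3 : lam < 2 * r - 1) :
    Tendsto (fun m : ℕ => (m : ℝ) * muM r m lam) atTop (nhds 0) := by
  have hc : 0 < 1 - (1 + lam) / (2 * r) := by
    rw [sub_pos, div_lt_one (by positivity)]
    linarith
  have hlim : Tendsto (fun m : ℕ => (m : ℝ) ^ (-(1 - (1 + lam) / (2 * r)))) atTop (nhds 0) :=
    (tendsto_rpow_neg_atTop hc).comp tendsto_natCast_atTop_atTop
  refine tendsto_of_tendsto_of_tendsto_of_le_of_le' tendsto_const_nhds hlim
    (Eventually.of_forall fun m => mul_nonneg (Nat.cast_nonneg _) ENNReal.toReal_nonneg) ?_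
  filter_upwards [eventually_ge_atTop 1] with m hm
  have hm0 : (0 : ℝ) < m := by exact_mod_cast hm
  have hL : 0 ≤ Real.log m := Real.log_natCast_nonneg m
  have hh : hthr r m ^ 2 = 2 * r * Real.log m := Real.sq_sqrt (by positivity)
  have hh0 : 0 ≤ hthr r m := Real.sqrt_nonneg _
  have := mu_le lam h1 h2 (hthr r m) (hthr r m / (2 * r)) (by positivity)
  calc (m : ℝ) * muM r m lam
      ≤ m * Real.exp (-(hthr r m / (2 * r)) * (2 * hthr r m)
          + (hthr r m / (2 * r)) ^ 2 * (1 + lam)) := by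
        unfold muM; gcongr
    _ = (m : ℝ) ^ (-(1 - (1 + lam) / (2 * r))) := by
        rw [Real.rpow_def_of_pos hm0]
        nth_rewrite 1 [← Real.exp_log hm0]
        rw [← Real.exp_add]
        congr 1
        have e : -(hthr r m / (2 * r)) * (2 * hthr r m)
          + (hthr r m / (2 * r)) ^ 2 * (1 + lam)
          = hthr r m ^ 2 * (-(1 / r) + (1 + lam) / (2 * r) ^ 2) := by
          field_simp
        rw [e, hh]
        field_simp
        ring_nf

/-- Case 1 of Lemma 1 (Gaussian score, subcritical regime). -/
theorem stmt0 {d : ℕ} (hd : 1 ≤ d) (r : ℝ) (hr : r ∈ Set.Ioo (0 : ℝ) 1)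
    (lam : ℝ) (hlam1 : -1 ≤ lam) (hlam2 : lam < 2 * r - 1) (hcrit : -1 < 2 * r - 1)
    (x y : Fin d → ℝ) (hx : unitVec x) (hy : unitVec y) (hxy : dotp x y = lam) :
    (∀ m : ℕ, ((Prob d m) {ω | score d m r x y ω ≠ 0}).toReal ≤ (m : ℝ) * muM r m lam) ∧
    Tendsto (fun m : ℕ => (m : ℝ) * muM r m lam) atTop (nhds 0) ∧
    Tendsto (fun m : ℕ => ((Prob d m) {ω | score d m r x y ω ≠ 0}).toReal) atTop (nhds 0) := by
  have h2 : lam ≤ 1 := by linarith [hr.2]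
  have hA := union_bound r lam hlam1 h2 x y hx hy hxy
  have hB := muM_lim r hr.1 lam hlam1 h2 hlam2
  exact ⟨hA, hB, tendsto_of_tendsto_of_tendsto_of_le_of_le tendsto_const_nhds hB
    (fun m => ENNReal.toReal_nonneg) hA⟩

end
end

section
/- Fix r ∈ (0,1) and λ ∈ (2r-1, 1). Let d ≥ 1 and let x, y be unit vectors in ℝ^d with ⟨x,y⟩ = λ. Define the normalized score S̃_m(x,y) := √m·(S_m(x,y) - μ_m(λ))/σ_m(λ). Then S̃_m(x,y) converges in distribution to a standard normal random variable as m → ∞; that is, for every t ∈ ℝ, P(S̃_m(x,y) < t) → Φ(t). -/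
open MeasureTheory ProbabilityTheory Filter Topology

noncomputable section

lemma law_pair {d : ℕ} (lam : ℝ) (h1 : lam ^ 2 ≤ 1)
    (x y : Fin d → ℝ) (hx : unitVec x) (hy : unitVec y) (hxy : dotp x y = lam) :
    Measure.map (fun a : Fin d → ℝ => (dotp a x, dotp a y))
      (Measure.pi fun _ : Fin d => gaussianReal 0 1) = gaussPair lam := by
  have hm : Measurable (fun a : Fin d → ℝ => (dotp a x, dotp a y)) := by
    unfold dotp; fun_prop
  have hm2 : Measurable
      (fun z : ℝ × ℝ => (z.1, lam * z.1 + Real.sqrt (1 - lam ^ 2) * z.2)) := by fun_prop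
  have : IsProbabilityMeasure (Measure.map (fun a : Fin d → ℝ => (dotp a x, dotp a y))
      (Measure.pi fun _ : Fin d => gaussianReal 0 1)) :=
    Measure.isProbabilityMeasure_map hm.aemeasurable
  have : IsProbabilityMeasure (gaussPair lam) :=
    Measure.isProbabilityMeasure_map hm2.aemeasurable
  apply Measure.ext_of_charFunDual
  ext L
  have hL : ∀ p : ℝ × ℝ, L p = L (1, 0) * p.1 + L (0, 1) * p.2 := by
    intro p
    have : p = p.1 • ((1 : ℝ), (0 : ℝ)) + p.2 • ((0 : ℝ), (1 : ℝ)) := by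
      ext <;> simp
    conv_lhs => rw [this]
    rw [map_add, map_smul, map_smul]; simp [mul_comm]
  set α := L (1, 0)
  set β := L (0, 1)
  have hg : ∀ u : ℝ, ∫ z, Complex.exp ((u * z : ℂ) * Complex.I) ∂(gaussianReal 0 1)
      = Complex.exp (-(u : ℂ) ^ 2 / 2) := by
    intro u
    have := charFun_gaussianReal (μ := 0) (v := 1) u
    rw [charFun_apply_real] at this
    rw [this]; congr 1; simp; ring
  rw [charFunDual_apply, charFunDual_apply, gaussPair, integral_map hm.aemeasurable (by fun_prop),
    integral_map hm2.aemeasurable (by fun_prop)]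
  have e1 : ∀ a : Fin d → ℝ, Complex.exp ((L (dotp a x, dotp a y) : ℂ) * Complex.I)
      = ∏ j, Complex.exp ((((α * x j + β * y j : ℝ) : ℂ) * (a j : ℂ)) * Complex.I) := by
    intro a
    rw [← Complex.exp_sum, ← Finset.sum_mul, hL]
    congr 2
    norm_cast
    simp only [dotp, Finset.mul_sum]
    rw [← Finset.sum_add_distrib]
    apply Finset.sum_congr rfl
    intros; ring
  have e2 : ∀ z : ℝ × ℝ,
      Complex.exp ((L (z.1, lam * z.1 + Real.sqrt (1 - lam ^ 2) * z.2) : ℂ) * Complex.I)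
      = Complex.exp ((((α + β * lam : ℝ) : ℂ) * (z.1 : ℂ)) * Complex.I) *
        Complex.exp ((((β * Real.sqrt (1 - lam ^ 2) : ℝ) : ℂ) * (z.2 : ℂ)) * Complex.I) := by
    intro z
    rw [← Complex.exp_add, hL]
    congr 1
    push_cast
    ring
  simp_rw [e1, e2]
  rw [integral_fintype_prod_eq_prod (fun j (z : ℝ) =>
    Complex.exp ((((α * x j + β * y j : ℝ) : ℂ) * (z : ℂ)) * Complex.I)),
    integral_prod_mul (fun z : ℝ => Complex.exp ((((α + β * lam : ℝ) : ℂ) * (z : ℂ)) * Complex.I))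
     (fun z : ℝ => Complex.exp ((((β * Real.sqrt (1 - lam ^ 2) : ℝ) : ℂ) * (z : ℂ)) * Complex.I))]
  simp_rw [hg]
  rw [← Complex.exp_sum, ← Complex.exp_add]
  congr 1
  norm_cast
  have hs : Real.sqrt (1 - lam ^ 2) ^ 2 = 1 - lam ^ 2 := Real.sq_sqrt (by linarith)
  have : ∑ j, (α * x j + β * y j) ^ 2 = α ^ 2 + 2 * α * β * lam + β ^ 2 := by
    have : ∀ j, (α * x j + β * y j) ^ 2
      = α ^ 2 * x j ^ 2 + 2 * α * β * (x j * y j) + β ^ 2 * y j ^ 2 := by intro j; ring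
    simp_rw [this, Finset.sum_add_distrib, ← Finset.mul_sum]
    rw [unitVec] at hx hy
    rw [dotp] at hxy
    rw [hx, hy, hxy]; ring
  rw [← Finset.sum_div, Finset.sum_neg_distrib, this, mul_pow, hs]
  ring

lemma gauss_interval (a : ℝ) (ha : 0 ≤ a) :
    gaussianPDFReal 0 1 (a + 1) ≤ (gaussianReal 0 1).real (Set.Icc a (a + 1)) := by
  rw [measureReal_def, gaussianReal_apply_eq_integral _ one_ne_zero, ENNReal.toReal_ofReal]
  · have hc : ∫ _ in Set.Icc a (a + 1), gaussianPDFReal 0 1 (a + 1) = gaussianPDFReal 0 1 (a + 1) := by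
      simp
    rw [← hc]
    apply setIntegral_mono_on _ (integrable_gaussianPDFReal 0 1).integrableOn measurableSet_Icc
    · intro z hz
      simp only [gaussianPDFReal]
      gcongr
      · linarith [hz.1]
      · exact hz.2
    · simp
  · exact integral_nonneg fun z => gaussianPDFReal_nonneg _ _ _

lemma mu_eq (lam h : ℝ) : mu lam h = ((gaussianReal 0 1).prod (gaussianReal 0 1)).real
    {z : ℝ × ℝ | h ≤ z.1 ∧ h ≤ lam * z.1 + Real.sqrt (1 - lam ^ 2) * z.2} := by
  rw [mu, gaussPair, Measure.map_apply (by fun_prop)]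
  · rfl
  · exact (measurableSet_le measurable_const measurable_fst).inter
      (measurableSet_le measurable_const measurable_snd)

lemma mu_lower (lam h : ℝ) (h0 : 0 ≤ h) (h1 : lam ^ 2 < 1) :
    gaussianPDFReal 0 1 (h + 1) *
      gaussianPDFReal 0 1 ((h * (1 - lam) + |lam|) / Real.sqrt (1 - lam ^ 2) + 1) ≤ mu lam h := by
  have hc : 0 < Real.sqrt (1 - lam ^ 2) := Real.sqrt_pos.2 (by linarith)
  have hl : lam ≤ 1 := by nlinarith
  set c := Real.sqrt (1 - lam ^ 2) with hcdef
  set b := (h * (1 - lam) + |lam|) / c with hb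
  have hb0 : 0 ≤ b := by
    apply div_nonneg _ hc.le
    have := abs_nonneg lam
    nlinarith
  calc _ ≤ (gaussianReal 0 1).real (Set.Icc h (h + 1)) * (gaussianReal 0 1).real (Set.Icc b (b + 1)) := by
        gcongr
        · exact gaussianPDFReal_nonneg _ _ _
        · exact gauss_interval h h0
        · exact gauss_interval b hb0
    _ = ((gaussianReal 0 1).prod (gaussianReal 0 1)).real
          (Set.Icc h (h + 1) ×ˢ Set.Icc b (b + 1)) := by
        rw [measureReal_prod_prod]
    _ ≤ mu lam h := by
        rw [mu_eq]
        apply measureReal_mono _ (by finiteness)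
        rintro ⟨u, v⟩ ⟨⟨hu1, hu2⟩, ⟨hv1, hv2⟩⟩
        refine ⟨hu1, ?_⟩
        simp only at *
        have : c * b = h * (1 - lam) + |lam| := by rw [hb]; field_simp
        have h3 : c * b ≤ c * v := by gcongr
        rcases abs_cases lam with ⟨e, _⟩ | ⟨e, _⟩ <;> rw [e] at this <;> nlinarith

lemma mu_le_s1 (lam h : ℝ) : mu lam h ≤ (gaussianReal 0 1).real (Set.Ici h) := by
  rw [mu_eq]
  calc _ ≤ ((gaussianReal 0 1).prod (gaussianReal 0 1)).real (Set.Ici h ×ˢ Set.univ) := by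
        apply measureReal_mono _ (by finiteness)
        rintro ⟨u, v⟩ ⟨h1, _⟩
        exact ⟨h1, trivial⟩
    _ = _ := by rw [measureReal_prod_prod]; simp

lemma tendsto_hthr (r : ℝ) (hr : 0 < r) : Tendsto (hthr r) atTop atTop := by
  unfold hthr
  apply Real.tendsto_sqrt_atTop.comp
  apply Tendsto.const_mul_atTop (by positivity)
  exact Real.tendsto_log_atTop.comp tendsto_natCast_atTop_atTop

lemma tendsto_muM_zero (r : ℝ) (hr : 0 < r) (lam : ℝ) :
    Tendsto (fun m => muM r m lam) atTop (𝓝 0) := by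
  have h1 : Tendsto (fun h : ℝ => (gaussianReal 0 1).real (Set.Ici h)) atTop (𝓝 0) := by
    have := tendsto_measure_iInter_atTop (μ := gaussianReal 0 1) (s := fun h : ℝ => Set.Ici h)
      (fun h => measurableSet_Ici.nullMeasurableSet) (fun a b hab => Set.Ici_subset_Ici.2 hab)
      ⟨0, by finiteness⟩
    have he : ⋂ h : ℝ, Set.Ici h = ∅ := by
      ext z; simp only [Set.mem_iInter, Set.mem_Ici, Set.mem_empty_iff_false, iff_false, not_forall]
      exact ⟨z + 1, by linarith⟩
    rw [he, measure_empty] at this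
    have h2 := (ENNReal.tendsto_toReal ENNReal.zero_ne_top).comp this
    exact h2
  exact squeeze_zero (fun m => ENNReal.toReal_nonneg) (fun m => mu_le_s1 _ _)
    (h1.comp (tendsto_hthr r hr))

lemma tendsto_m_mu (r : ℝ) (hr : r ∈ Set.Ioo (0 : ℝ) 1)
    (lam : ℝ) (hlam : lam ∈ Set.Ioo (2 * r - 1) 1) :
    Tendsto (fun m : ℕ => (m : ℝ) * muM r m lam) atTop atTop := by
  obtain ⟨hr0, hr1⟩ := hr
  obtain ⟨hl0, hl1⟩ := hlam
  have hlm : 0 < 1 + lam := by linarith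
  have h1 : lam ^ 2 < 1 := by nlinarith
  have hc : 0 < Real.sqrt (1 - lam ^ 2) := Real.sqrt_pos.2 (by linarith)
  have hc2 : Real.sqrt (1 - lam ^ 2) ^ 2 = 1 - lam ^ 2 := Real.sq_sqrt (by linarith)
  set c := Real.sqrt (1 - lam ^ 2) with hcdef
  -- lower bound function
  let A : ℝ := 1 / (2 * r) - 1 / (1 + lam)
  have hA : 0 < A := by
    have : 1 / (1 + lam) < 1 / (2 * r) := by
      apply one_div_lt_one_div_of_lt <;> linarith
    simp only [A]; linarith
  let a : ℝ := (1 - lam) / c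
  let b : ℝ := |lam| / c + 1
  have ha2 : a ^ 2 = 2 / (1 + lam) - 1 := by
    simp only [a]
    rw [div_pow, hc2]
    have : 1 - lam ^ 2 ≠ 0 := by linarith
    field_simp
    ring
  let K : ℝ := 1 + a * b
  let C : ℝ := (1 + b ^ 2) / 2
  have hT : Tendsto (fun h : ℝ => (2 * Real.pi)⁻¹ * Real.exp (h * (A * h - K) - C)) atTop atTop := by
    apply Tendsto.const_mul_atTop (by positivity)
    apply Real.tendsto_exp_atTop.comp
    apply tendsto_atTop_add_const_right
    apply Tendsto.atTop_mul_atTop₀ tendsto_id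
    apply tendsto_atTop_add_const_right
    exact Tendsto.const_mul_atTop hA tendsto_id
  refine tendsto_atTop_mono' _ ?_ (hT.comp (tendsto_hthr r hr0))
  filter_upwards [eventually_ge_atTop 1] with m hm
  have hm' : (1 : ℝ) ≤ m := by exact_mod_cast hm
  have hlog : 0 ≤ Real.log m := Real.log_nonneg hm'
  have hh : hthr r m ^ 2 = 2 * r * Real.log m := Real.sq_sqrt (by positivity)
  have hh0 : 0 ≤ hthr r m := Real.sqrt_nonneg _
  have hlow := mu_lower lam (hthr r m) hh0 h1
  rw [← hcdef] at hlow
  simp only [Function.comp]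
  refine le_trans (le_of_eq ?_) (mul_le_mul_of_nonneg_left hlow (by positivity))
  set h := hthr r m
  have hmexp : (m : ℝ) = Real.exp (h ^ 2 / (2 * r)) := by
    rw [hh, mul_div_cancel_left₀ _ (by positivity), Real.exp_log (by linarith)]
  have hab : (h * (1 - lam) + |lam|) / c + 1 = a * h + b := by
    simp only [a, b]; ring
  rw [hab, hmexp]
  simp only [gaussianPDFReal, NNReal.coe_one, mul_one, sub_zero]
  have hpi : (Real.sqrt (2 * Real.pi))⁻¹ * (Real.sqrt (2 * Real.pi))⁻¹ = (2 * Real.pi)⁻¹ := by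
    rw [← mul_inv, Real.mul_self_sqrt (by positivity)]
  rw [← hpi]
  have e : h * (A * h - K) - C = h ^ 2 / (2 * r) + (-(h + 1) ^ 2 / 2 + -(a * h + b) ^ 2 / 2) := by
    simp only [A, K, C]
    have : (a * h + b) ^ 2 = (2 / (1 + lam) - 1) * h ^ 2 + 2 * a * b * h + b ^ 2 := by
      rw [← ha2]; ring
    rw [neg_div, neg_div, this]
    ring
  rw [e, Real.exp_add, Real.exp_add]
  ring

lemma exp_rem (u : ℝ) (hu : |u| ≤ 1) :
    ‖Complex.exp (u * Complex.I) - (1 + u * Complex.I - u ^ 2 / 2)‖ ≤ |u| ^ 3 := by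
  have hn : ‖(u : ℂ) * Complex.I‖ = |u| := by simp
  have h := Complex.exp_bound (x := (u : ℂ) * Complex.I) (by rw [hn]; exact hu) (n := 3) (by norm_num)
  rw [hn] at h
  have e : ∑ m ∈ Finset.range 3, ((u : ℂ) * Complex.I) ^ m / (m.factorial : ℂ)
      = 1 + u * Complex.I - u ^ 2 / 2 := by
    simp [Finset.sum_range_succ, Nat.factorial, mul_pow]
    ring
  rw [e] at h
  refine h.trans ?_
  have : (0 : ℝ) ≤ |u| ^ 3 := by positivity
  norm_num [Nat.factorial]
  linarith

lemma step_bound (m p κ t : ℝ) (hm : 0 < m) (hp0 : 0 ≤ p) (hp1 : p ≤ 1) (hκ : 0 ≤ κ)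
    (hmk : m * (κ ^ 2 * (p * (1 - p))) = 1) (ht : |t| * κ ≤ 1) :
    ‖(m : ℂ) * ((p * Complex.exp ((t * κ * (1 - p) : ℝ) * Complex.I) +
        (1 - p) * Complex.exp ((t * κ * (0 - p) : ℝ) * Complex.I)) - 1) - (-(t : ℂ) ^ 2 / 2)‖
      ≤ |t| ^ 3 * κ := by
  set u := t * κ * (1 - p) with hu
  set v := t * κ * (0 - p) with hv
  have hua : |u| = |t| * κ * (1 - p) := by
    rw [hu, abs_mul, abs_mul, abs_of_nonneg hκ, abs_of_nonneg (by linarith : 0 ≤ 1 - p)]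
  have hva : |v| = |t| * κ * p := by
    rw [hv, abs_mul, abs_mul, abs_of_nonneg hκ, zero_sub, abs_neg, abs_of_nonneg hp0]
  have htk : 0 ≤ |t| * κ := by positivity
  have hu1 : |u| ≤ 1 := by rw [hua]; exact mul_le_one₀ ht (by linarith) (by linarith)
  have hv1 : |v| ≤ 1 := by rw [hva]; exact mul_le_one₀ ht hp0 hp1
  have Ru := exp_rem u hu1
  have Rv := exp_rem v hv1
  have hmkC : (m : ℂ) * ((κ : ℂ) ^ 2 * ((p : ℂ) * (1 - p))) = 1 := by exact_mod_cast hmk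
  have hdec : (m : ℂ) * ((p * Complex.exp ((u : ℝ) * Complex.I) +
        (1 - p) * Complex.exp ((v : ℝ) * Complex.I)) - 1) - (-(t : ℂ) ^ 2 / 2)
      = (m : ℂ) * (p * (Complex.exp (u * Complex.I) - (1 + u * Complex.I - u ^ 2 / 2)) +
        ((1 - p : ℝ) : ℂ) * (Complex.exp (v * Complex.I) - (1 + v * Complex.I - v ^ 2 / 2))) := by
    rw [hu, hv]
    push_cast
    linear_combination ((t : ℂ) ^ 2 / 2) * (-hmkC)
  rw [hdec, norm_mul, Complex.norm_real, Real.norm_of_nonneg hm.le]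
  calc _ ≤ m * (p * |u| ^ 3 + (1 - p) * |v| ^ 3) := by
        gcongr
        refine (norm_add_le _ _).trans ?_
        rw [norm_mul, norm_mul, Complex.norm_real, Complex.norm_real, Real.norm_of_nonneg hp0,
          Real.norm_of_nonneg (by linarith : 0 ≤ 1 - p)]
        have : 0 ≤ 1 - p := by linarith
        gcongr
    _ = |t| ^ 3 * κ * (m * (κ ^ 2 * (p * (1 - p)))) * ((1 - p) ^ 2 + p ^ 2) := by
        rw [hua, hva]; ring
    _ ≤ |t| ^ 3 * κ := by
        rw [hmk, mul_one]
        apply mul_le_of_le_one_right (by positivity)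
        nlinarith

lemma clt_analytic (p κ : ℕ → ℝ) (t : ℝ) (hp0 : ∀ m, 0 ≤ p m) (hp1 : ∀ m, p m ≤ 1)
    (hκ : ∀ m, 0 ≤ κ m) (hκ0 : Tendsto κ atTop (𝓝 0))
    (hmk : ∀ᶠ m : ℕ in atTop, (m : ℝ) * (κ m ^ 2 * (p m * (1 - p m))) = 1) :
    Tendsto (fun m : ℕ => ((p m : ℂ) * Complex.exp ((t * κ m * (1 - p m) : ℝ) * Complex.I) +
        (1 - p m) * Complex.exp ((t * κ m * (0 - p m) : ℝ) * Complex.I)) ^ m) atTop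
      (𝓝 (Complex.exp (-(t : ℂ) ^ 2 / 2))) := by
  have key := Complex.tendsto_one_add_pow_exp_of_tendsto (t := -(t : ℂ) ^ 2 / 2)
    (g := fun m : ℕ => ((p m : ℂ) * Complex.exp ((t * κ m * (1 - p m) : ℝ) * Complex.I) +
        (1 - p m) * Complex.exp ((t * κ m * (0 - p m) : ℝ) * Complex.I)) - 1) ?_
  · simpa only [add_sub_cancel] using key
  · rw [tendsto_iff_norm_sub_tendsto_zero]
    have hb : Tendsto (fun m => |t| ^ 3 * κ m) atTop (𝓝 0) := by
      simpa using hκ0.const_mul (|t| ^ 3)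
    have hb1 : Tendsto (fun m => |t| * κ m) atTop (𝓝 0) := by
      simpa using hκ0.const_mul (|t|)
    refine squeeze_zero' (Eventually.of_forall fun m => norm_nonneg _) ?_ hb
    filter_upwards [hmk, hb1.eventually (eventually_le_nhds (zero_lt_one)),
      eventually_ge_atTop 1] with m h1 h2 h3
    have := step_bound m (p m) (κ m) t (by exact_mod_cast h3) (hp0 m) (hp1 m) (hκ m) h1 h2
    simpa using this

lemma measurable_score {d : ℕ} (m : ℕ) (r lam : ℝ) (x y : Fin d → ℝ) :
    Measurable (fun ω : Fin m → Fin d → ℝ =>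
      Real.sqrt m * (score d m r x y ω - muM r m lam) / sigM r m lam) := by
  have hdm : ∀ (i : Fin m) (z : Fin d → ℝ),
      Measurable (fun ω : Fin m → Fin d → ℝ => dotp (ω i) z) := by
    intro i z; unfold dotp; fun_prop
  have hs : Measurable (fun ω : Fin m → Fin d → ℝ => score d m r x y ω) := by
    unfold score
    refine measurable_const.mul (Finset.measurable_sum _ fun i _ => Measurable.mul ?_ ?_)
    · exact Measurable.ite (measurableSet_le measurable_const (hdm i x)) measurable_const
        measurable_const
    · exact Measurable.ite (measurableSet_le measurable_const (hdm i y)) measurable_const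
        measurable_const
  exact ((hs.sub_const _).const_mul _).div_const _

lemma charFun_score {d : ℕ} (m : ℕ) (hm : 1 ≤ m) (r lam : ℝ) (h1 : lam ^ 2 ≤ 1)
    (x y : Fin d → ℝ) (hx : unitVec x) (hy : unitVec y) (hxy : dotp x y = lam) (t : ℝ) :
    charFun (Measure.map (fun ω => Real.sqrt m * (score d m r x y ω - muM r m lam) / sigM r m lam)
      (Prob d m)) t =
    ((muM r m lam : ℂ) * Complex.exp
        ((t * (Real.sqrt m * sigM r m lam)⁻¹ * (1 - muM r m lam) : ℝ) * Complex.I) +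
      (1 - muM r m lam) * Complex.exp
        ((t * (Real.sqrt m * sigM r m lam)⁻¹ * (0 - muM r m lam) : ℝ) * Complex.I)) ^ m := by
  have hms : Measurable
      (fun ω => Real.sqrt m * (score d m r x y ω - muM r m lam) / sigM r m lam) := by
    exact measurable_score m r lam x y
  set p := muM r m lam with hp
  set h := hthr r m with hh
  set κ := (Real.sqrt m * sigM r m lam)⁻¹ with hκ
  let E : Set (Fin d → ℝ) := {a | h ≤ dotp a x ∧ h ≤ dotp a y}
  have hdm : ∀ z : Fin d → ℝ, Measurable (fun a : Fin d → ℝ => dotp a z) := by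
    intro z; unfold dotp; fun_prop
  have hE : MeasurableSet E :=
    (measurableSet_le measurable_const (hdm x)).inter (measurableSet_le measurable_const (hdm y))
  have hpE : (Measure.pi fun _ : Fin d => gaussianReal 0 1).real E = p := by
    rw [hp, muM, mu, ← law_pair lam h1 x y hx hy hxy, Measure.map_apply]
    · rfl
    · exact (hdm x).prodMk (hdm y)
    · exact (measurableSet_le measurable_const measurable_fst).inter
        (measurableSet_le measurable_const measurable_snd)
  let ξ : (Fin d → ℝ) → ℝ := fun a =>
    (if h ≤ dotp a x then (1 : ℝ) else 0) * (if h ≤ dotp a y then (1 : ℝ) else 0)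
  rw [charFun_apply_real, integral_map hms.aemeasurable (by fun_prop)]
  have e1 : ∀ ω : Fin m → Fin d → ℝ,
      Complex.exp (t * ((Real.sqrt m * (score d m r x y ω - p) / sigM r m lam : ℝ) : ℂ) * Complex.I)
      = ∏ i, Complex.exp ((t * κ * (ξ (ω i) - p) : ℝ) * Complex.I) := by
    intro ω
    rw [← Complex.exp_sum, ← Finset.sum_mul]
    congr 2
    norm_cast
    rw [← Finset.mul_sum, Finset.sum_sub_distrib]
    simp only [score, Finset.sum_const, Finset.card_univ, Fintype.card_fin, nsmul_eq_mul]
    have hm0 : (0 : ℝ) < m := by exact_mod_cast hm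
    have hs : Real.sqrt m ≠ 0 := (Real.sqrt_pos.2 hm0).ne'
    change t * (Real.sqrt m * (1 / (m : ℝ) * (∑ i, ξ (ω i)) - p) / sigM r m lam) = _
    rw [hκ, mul_inv]
    have : Real.sqrt m * (1 / (m : ℝ) * (∑ i, ξ (ω i)) - p)
        = (Real.sqrt m)⁻¹ * (∑ i, ξ (ω i) - m * p) := by
      have h2 : Real.sqrt m * Real.sqrt m = m := Real.mul_self_sqrt hm0.le
      field_simp
      rw [sq, h2]
    rw [this]
    ring
  simp_rw [e1]
  rw [Prob, integral_fintype_prod_eq_pow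
    (fun a : Fin d → ℝ => Complex.exp ((t * κ * (ξ a - p) : ℝ) * Complex.I)), Fintype.card_fin]
  congr 1
  set c1 := Complex.exp ((t * κ * (1 - p) : ℝ) * Complex.I) with hc1
  set c0 := Complex.exp ((t * κ * (0 - p) : ℝ) * Complex.I) with hc0
  have e2 : ∀ a, Complex.exp ((t * κ * (ξ a - p) : ℝ) * Complex.I)
      = c0 + E.indicator (fun _ => c1 - c0) a := by
    intro a
    by_cases ha : a ∈ E
    · have : ξ a = 1 := by simp only [ξ]; rw [if_pos ha.1, if_pos ha.2]; simp
      rw [Set.indicator_of_mem ha, this, hc1]; ring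
    · have : ξ a = 0 := by
        simp only [ξ]
        by_cases h1 : h ≤ dotp a x
        · rw [if_neg (fun h2 => ha ⟨h1, h2⟩)]; simp
        · rw [if_neg h1]; simp
      rw [Set.indicator_of_notMem ha, this, hc0]; ring
  simp_rw [e2]
  rw [integral_add (integrable_const _) ((integrable_const _).indicator hE),
    integral_indicator hE, setIntegral_const, hpE]
  simp
  ring

/-- Case 2 of Lemma 1: the normalized score converges in
distribution to a standard normal. -/
theorem stmt1 {d : ℕ} (hd : 1 ≤ d) (r : ℝ) (hr : r ∈ Set.Ioo (0 : ℝ) 1)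
    (lam : ℝ) (hlam : lam ∈ Set.Ioo (2 * r - 1) 1)
    (x y : Fin d → ℝ) (hx : unitVec x) (hy : unitVec y) (hxy : dotp x y = lam) :
    ∀ t : ℝ,
      Tendsto (fun m : ℕ =>
          ((Prob d m) {ω | Real.sqrt m * (score d m r x y ω - muM r m lam) / sigM r m lam < t}).toReal)
        atTop (nhds (Phi t)) := by
  obtain ⟨hr0, hr1⟩ := hr
  have hl0 := hlam.1
  have hl1 := hlam.2
  have h1 : lam ^ 2 ≤ 1 := by nlinarith
  intro t
  have hms : ∀ m : ℕ, Measurable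
      (fun ω => Real.sqrt m * (score d m r x y ω - muM r m lam) / sigM r m lam) :=
    fun m => measurable_score m r lam x y
  have hPr : ∀ m, IsProbabilityMeasure (Prob d m) := fun m => by unfold Prob; infer_instance
  let law : ℕ → ProbabilityMeasure ℝ := fun m =>
    ⟨Measure.map (fun ω => Real.sqrt m * (score d m r x y ω - muM r m lam) / sigM r m lam)
      (Prob d m), Measure.isProbabilityMeasure_map (hms m).aemeasurable⟩
  let g : ProbabilityMeasure ℝ := ⟨gaussianReal 0 1, inferInstance⟩
  have hp0 : ∀ m, 0 ≤ muM r m lam := fun m => ENNReal.toReal_nonneg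
  have hp1 : ∀ m, muM r m lam ≤ 1 := fun m => (mu_le_s1 _ _).trans measureReal_le_one
  have hpz := tendsto_muM_zero r hr0 lam
  have hinf := tendsto_m_mu r ⟨hr0, hr1⟩ lam hlam
  have hsg : ∀ m : ℕ, Real.sqrt m * sigM r m lam
      = Real.sqrt (m * muM r m lam * (1 - muM r m lam)) := by
    intro m
    rw [sigM, sigma', ← muM, mul_assoc, Real.sqrt_mul (Nat.cast_nonneg m)]
  have hinf2 : Tendsto (fun m : ℕ => (m : ℝ) * muM r m lam * (1 - muM r m lam)) atTop atTop := by
    have : Tendsto (fun m : ℕ => 1 - muM r m lam) atTop (𝓝 1) := by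
      simpa using hpz.const_sub 1
    exact hinf.atTop_mul_pos zero_lt_one this
  have hconv : Tendsto law atTop (𝓝 g) := by
    refine ProbabilityMeasure.tendsto_iff_tendsto_charFun.2 fun s => ?_
    have hlim := clt_analytic (fun m => muM r m lam) (fun m => (Real.sqrt m * sigM r m lam)⁻¹) s
      hp0 hp1 (fun m => by rw [hsg]; positivity)
      (by
        simp_rw [hsg]
        exact tendsto_inv_atTop_zero.comp (Real.tendsto_sqrt_atTop.comp hinf2))
      (by
        filter_upwards [hinf2.eventually_gt_atTop 0] with m hm
        rw [hsg, inv_pow, Real.sq_sqrt hm.le, mul_left_comm, ← mul_assoc (m : ℝ)]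
        exact inv_mul_cancel₀ hm.ne')
    have hg : charFun (g : Measure ℝ) s = Complex.exp (-(s : ℂ) ^ 2 / 2) := by
      change charFun (gaussianReal 0 1) s = _
      rw [charFun_gaussianReal]; congr 1; simp; ring
    rw [hg]
    refine hlim.congr' ?_
    filter_upwards [eventually_ge_atTop 1] with m hm
    exact (charFun_score m hm r lam h1 x y hx hy hxy s).symm
  have : NullSingletonClass (gaussianReal 0 1) := nullSingletonClass_gaussianReal one_ne_zero
  have hfin := ProbabilityMeasure.tendsto_measure_of_null_frontier_of_tendsto' hconv
    (E := Set.Iio t) (by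
      rw [frontier_Iio]
      exact measure_singleton (μ := gaussianReal 0 1) t)
  have hfin2 := (ENNReal.tendsto_toReal (by finiteness)).comp hfin
  have hPhi : Phi t = ((g : Measure ℝ) (Set.Iio t)).toReal := by
    change _ = (gaussianReal 0 1 (Set.Iio t)).toReal
    rw [Phi, measure_congr Iio_ae_eq_Iic]
  rw [hPhi]
  refine hfin2.congr fun m => ?_
  change (Measure.map _ (Prob d m) (Set.Iio t)).toReal = _
  rw [Measure.map_apply (hms m) measurableSet_Iio]
  rfl

end
end
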